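/- arXiv:1905.09729 — 2 statements merged into one kernel-verified Lean document; each statement's English description precedes it below -/
import Mathlib

section
/- Let t, L be positive integers, let H be a graph on L vertices, and let G be an ordered graph containing the blow-up H(t·2^L) as a subgraph. Then there exists a total ordering of the vertices of H such that the consistently ordered blow-up H(t) is an ordered subgraph of G. -/
/-!
Let `x` be the smallest among the `t`-th smallest vertices of the `L` parts. The part `x` comes
from keeps its `t` vertices up to `x`, while every other part discards its vertices up to `x`, of
which there are at most `t`. Hence each round costs a part at most `t` vertices, and parts of size
`t * L ≤ t * 2 ^ L` last for all `L` rounds. Any two of the chosen `t`-sets lie on either side of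
some `x`, so picking one vertex in each of them orders the parts.
-/

section Precedes

variable {ι V : Type*} [LinearOrder V]

/-- Every element of `A` lies strictly below every element of `B`: the relation required between
the parts of a consistently ordered blow-up. It holds vacuously if `A` or `B` is empty. -/
def Precedes (A B : Finset V) : Prop :=
  ∀ x ∈ A, ∀ y ∈ B, x < y

/-- One of `A` and `B` lies entirely below the other: two parts of a consistently ordered blow-up
whose relative order is left open. -/
def OrderSeparated (A B : Finset V) : Prop :=
  Precedes A B ∨ Precedes B A

theorem Precedes.disjoint {A B : Finset V} (h : Precedes A B) : Disjoint A B :=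
  Finset.disjoint_left.mpr fun x hxA hxB => lt_irrefl x (h x hxA x hxB)

theorem OrderSeparated.disjoint {A B : Finset V} (h : OrderSeparated A B) : Disjoint A B :=
  h.elim Precedes.disjoint fun hBA => hBA.disjoint.symm

theorem pairwise_orderSeparated_update [DecidableEq ι] {S : Set ι} {u : ι} (hu : u ∉ S)
    {B : ι → Finset V} {C : Finset V} (hC : ∀ v ∈ S, Precedes C (B v))
    (hB : S.Pairwise fun v w => OrderSeparated (B v) (B w)) :
    (insert u S).Pairwise fun v w =>
      OrderSeparated (Function.update B u C v) (Function.update B u C w) := by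
  have update_of_mem : ∀ v ∈ S, Function.update B u C v = B v := fun v hv =>
    Function.update_of_ne (ne_of_mem_of_not_mem hv hu) ..
  refine Set.pairwise_insert.mpr ⟨fun v hv w hw hvw => ?_, fun v hv _ => ?_⟩
  · simpa only [update_of_mem v hv, update_of_mem w hw] using hB hv hw hvw
  · rw [Function.update_self, update_of_mem v hv]
    exact ⟨Or.inl (hC v hv), Or.inr (hC v hv)⟩

theorem exists_card_filter_le_eq {t : ℕ} (ht : 1 ≤ t) {A : Finset V} (hA : t ≤ A.card) :
    ∃ x, (A.filter (· ≤ x)).card = t := by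
  let e := A.orderEmbOfFin rfl
  let i : Fin A.card := ⟨t - 1, by omega⟩
  have filter_le_eq_map : A.filter (· ≤ e i) = (Finset.Iic i).map e.toEmbedding := by
    have eq_map_univ : A = Finset.univ.map e.toEmbedding := (A.map_orderEmbOfFin_univ rfl).symm
    ext y
    constructor
    · intro hy
      obtain ⟨hyA, hyi⟩ := Finset.mem_filter.mp hy
      rw [eq_map_univ] at hyA
      obtain ⟨j, -, rfl⟩ := Finset.mem_map.mp hyA
      exact Finset.mem_map_of_mem _ (Finset.mem_Iic.mpr (e.le_iff_le.mp hyi))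
    · intro hy
      obtain ⟨j, hj, rfl⟩ := Finset.mem_map.mp hy
      exact Finset.mem_filter.mpr
        ⟨A.orderEmbOfFin_mem rfl j, e.monotone (Finset.mem_Iic.mp hj)⟩
  refine ⟨e i, ?_⟩
  rw [filter_le_eq_map, Finset.card_map, Fin.card_Iic]
  exact Nat.sub_add_cancel ht

theorem exists_minimal_cut {t : ℕ} (ht : 1 ≤ t) {S : Finset ι} (hS : S.Nonempty)
    {A : ι → Finset V} (hA : ∀ u ∈ S, t ≤ (A u).card) :
    ∃ u ∈ S, ∃ x, ((A u).filter (· ≤ x)).card = t ∧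
      ∀ v ∈ S, (A v).card ≤ t + ((A v).filter (x < ·)).card := by
  have exists_cut := fun u hu => exists_card_filter_le_eq ht (hA u hu)
  have : Nonempty V := hS.elim fun u hu => (exists_cut u hu).nonempty
  choose! cut hcut using exists_cut
  obtain ⟨u, hu, hmin⟩ := S.exists_min_image cut hS
  refine ⟨u, hu, cut u, hcut u hu, fun v hv => ?_⟩
  have below_le : ((A v).filter (· ≤ cut u)).card ≤ t := by
    rw [← hcut v hv]
    exact Finset.card_le_card
      (Finset.monotone_filter_right _ fun _ _ hy => hy.trans (hmin v hv))
  have hsplit := (A v).card_filter_add_card_filter_not (· ≤ cut u)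
  simp only [not_le] at hsplit
  omega

theorem exists_pairwise_orderSeparated {t : ℕ} (ht : 1 ≤ t) (S : Finset ι) (A : ι → Finset V)
    (hA : ∀ u ∈ S, t * S.card ≤ (A u).card) :
    ∃ B : ι → Finset V, (∀ u ∈ S, B u ⊆ A u ∧ (B u).card = t) ∧
      (S : Set ι).Pairwise fun u v => OrderSeparated (B u) (B v) := by
  classical
  induction hn : S.card generalizing S A with
  | zero =>
    obtain rfl := Finset.card_eq_zero.mp hn
    exact ⟨A, by simp, by simp⟩
  | succ n ih =>
    have hS : S.Nonempty := Finset.card_pos.mp (by omega)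
    obtain ⟨u, hu, x, hux, hcut⟩ := exists_minimal_cut ht hS fun v hv =>
      (Nat.le_mul_of_pos_right t hS.card_pos).trans (hA v hv)
    obtain ⟨T, huT, rfl⟩ : ∃ T, u ∉ T ∧ insert u T = S :=
      ⟨S.erase u, Finset.notMem_erase u S, Finset.insert_erase hu⟩
    have card_above : ∀ v ∈ T, t * T.card ≤ ((A v).filter (x < ·)).card := fun v hv => by
      have hAv := (hA v (Finset.mem_insert_of_mem hv)).trans (hcut v (Finset.mem_insert_of_mem hv))
      rw [Finset.card_insert_of_notMem huT, mul_add] at hAv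
      omega
    obtain ⟨B, hB, hBT⟩ := ih T _ card_above (by simpa [huT] using hn)
    let C := (A u).filter (· ≤ x)
    have hC : ∀ v ∈ T, Precedes C (B v) := fun v hv y hy z hz =>
      (Finset.mem_filter.mp hy).2.trans_lt (Finset.mem_filter.mp ((hB v hv).1 hz)).2
    refine ⟨Function.update B u C, (Finset.forall_mem_insert ..).mpr ⟨?_, fun v hv => ?_⟩, ?_⟩
    · rw [Function.update_self]
      exact ⟨Finset.filter_subset .., hux⟩
    · rw [Function.update_of_ne (ne_of_mem_of_not_mem hv huT)]
      exact ⟨(hB v hv).1.trans (Finset.filter_subset ..), (hB v hv).2⟩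
    · rw [Finset.coe_insert]
      exact pairwise_orderSeparated_update huT hC hBT

theorem exists_equiv_fin_precedes [Fintype ι] {n : ℕ} (hn : Fintype.card ι = n)
    {B : ι → Finset V} (hne : ∀ u, (B u).Nonempty)
    (hB : Pairwise fun u v => OrderSeparated (B u) (B v)) :
    ∃ σ : ι ≃ Fin n, ∀ u v, σ u < σ v → Precedes (B u) (B v) := by
  choose p hp using hne
  have p_injective : Function.Injective p := fun u v huv => by
    by_contra huv_ne
    exact Finset.disjoint_left.mp (hB huv_ne).disjoint (hp u) (huv ▸ hp v)
  let : LinearOrder ι := LinearOrder.lift' p p_injective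
  let σ : ι ≃o Fin n := (Fintype.orderIsoFinOfCardEq ι hn).symm
  refine ⟨σ.toEquiv, fun u v huv => ?_⟩
  have p_lt : p u < p v := σ.lt_iff_lt.mp huv
  exact (hB (ne_of_apply_ne p p_lt.ne)).resolve_right fun h =>
    p_lt.asymm (h _ (hp v) _ (hp u))

end Precedes

theorem exists_injective_forall_mem_of_pairwise_disjoint {ι V : Type*} {t : ℕ}
    {B : ι → Finset V} (hcard : ∀ u, (B u).card = t)
    (hdisj : Pairwise fun u v => Disjoint (B u) (B v)) :
    ∃ g : ι × Fin t → V, Function.Injective g ∧ ∀ u a, g (u, a) ∈ B u := by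
  let e : ∀ u, Fin t ≃ B u := fun u => ((B u).equivFinOfCardEq (hcard u)).symm
  refine ⟨fun p => e p.1 p.2, ?_, fun u a => (e u a).2⟩
  rintro ⟨u, a⟩ ⟨v, b⟩ (hg : (e u a : V) = e v b)
  obtain rfl : u = v := hdisj.eq (Finset.not_disjoint_iff.mpr ⟨_, (e u a).2, hg ▸ (e v b).2⟩)
  exact congrArg (Prod.mk u) ((e u).injective (Subtype.ext hg))

theorem stmt_5_general {ι κ V : Type*} [Fintype ι] [Fintype κ] [LinearOrder V] {t n : ℕ}
    (ht : 1 ≤ t) (hι : Fintype.card ι = n) (hκ : t * n ≤ Fintype.card κ)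
    (G : SimpleGraph V) (H : SimpleGraph ι) (f : ι × κ → V)
    (hf : ∀ u, Function.Injective fun a => f (u, a))
    (hadj : ∀ u v a b, H.Adj u v → G.Adj (f (u, a)) (f (v, b))) :
    ∃ σ : ι ≃ Fin n, ∃ g : ι × Fin t → V, Function.Injective g ∧
      (∀ u v a b, H.Adj u v → G.Adj (g (u, a)) (g (v, b))) ∧
      (∀ u v a b, σ u < σ v → g (u, a) < g (v, b)) := by
  let A : ι → Finset V := fun u => Finset.univ.map ⟨fun a => f (u, a), hf u⟩
  obtain ⟨B, hBA, hBsep⟩ := exists_pairwise_orderSeparated ht Finset.univ A fun u _ => by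
    simpa [A, hι] using hκ
  simp only [Finset.mem_univ, true_imp_iff, forall_and] at hBA
  obtain ⟨hBA, hBcard⟩ := hBA
  rw [Finset.coe_univ, Set.pairwise_univ] at hBsep
  obtain ⟨σ, hσ⟩ := exists_equiv_fin_precedes hι
    (fun u => Finset.card_pos.mp ((hBcard u).symm ▸ ht)) hBsep
  obtain ⟨g, g_injective, g_mem⟩ := exists_injective_forall_mem_of_pairwise_disjoint hBcard
    fun u v huv => (hBsep huv).disjoint
  refine ⟨σ, g, g_injective, fun u v a b huv => ?_,
    fun u v a b huv => hσ u v huv _ (g_mem u a) _ (g_mem v b)⟩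
  have g_eq_f : ∀ w c, ∃ d, f (w, d) = g (w, c) := fun w c => by
    simpa [A] using hBA w (g_mem w c)
  obtain ⟨a', ha⟩ := g_eq_f u a
  obtain ⟨b', hb⟩ := g_eq_f v b
  exact ha ▸ hb ▸ hadj u v a' b' huv

/-- If `H` is a graph on `L` vertices and an ordered graph `G` (a graph on a linearly
ordered vertex set) contains the blow-up `H(t·2^L)`, then there is a total ordering
`σ` of the vertices of `H` such that the consistently ordered blow-up `H(t)` is an
ordered subgraph of `G`: a copy of `H(t)` in which vertices from the part of `u`
precede vertices from the part of `v` whenever `σ u < σ v`. -/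
theorem stmt_5 (t L : ℕ) (ht : 1 ≤ t) (hL : 1 ≤ L)
    (V : Type) [LinearOrder V] (G : SimpleGraph V) (H : SimpleGraph (Fin L))
    (f : Fin L × Fin (t * 2 ^ L) → V) (hf : Function.Injective f)
    (hadj : ∀ u v a b, H.Adj u v → G.Adj (f (u, a)) (f (v, b))) :
    ∃ σ : Fin L → Fin L, Function.Bijective σ ∧
      ∃ g : Fin L × Fin t → V, Function.Injective g ∧
        (∀ u v a b, H.Adj u v → G.Adj (g (u, a)) (g (v, b))) ∧
        (∀ u v a b, σ u < σ v → g (u, a) < g (v, b)) := by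
  obtain ⟨σ, hσ⟩ := stmt_5_general ht (Fintype.card_fin L)
    (by simpa using Nat.mul_le_mul_left t Nat.lt_two_pow_self.le) G H f
    (fun u => hf.comp (Prod.mk_right_injective u)) hadj
  exact ⟨σ, σ.bijective, hσ⟩
end

section
/- For every positive integer k and every ε > 0 there exists N = N(k, ε) such that every Hamiltonian graph G on n ≥ N vertices with minimum degree δ(G) ≥ εn contains a 2-factor consisting of exactly k vertex-disjoint cycles. -/
/-!
Let `c` be the rotation along a Hamiltonian cycle, so that `c v` is the successor of `v`. The
digraph with an arc `v → w` whenever `v` is adjacent to `c w` has linear out-degrees, so a random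
tuple of bounded size induces, with positive probability, a subdigraph without sinks.
Supersaturation then yields a blow-up of a directed cycle `π` whose blocks are ordered along the
Hamiltonian cycle.

Sending each blow-up point `p` to `c (f p)`, where `f` is any permutation taking block `a` to block
`π a`, and every other vertex `v` to `c v`, gives a permutation along edges of the graph. One choice
of `f` leaves at least `k` cycles, one for each gap between consecutive points of a block. Whenever
there are at least two cycles, some block meets two of them, and composing `f` with a transposition
inside that block merges exactly these two. So the number of cycles can be lowered to exactly `k`.
-/

section Counting

open Finset Function

variable {ι α : Type*} [Fintype ι] [DecidableEq ι] [Fintype α]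

theorem card_filter_forall_apply (P : α → Prop) [DecidablePred P]
    [DecidablePred fun x : ι → α => ∀ i, P (x i)] :
    #{x : ι → α | ∀ i, P (x i)} = #{a | P a} ^ Fintype.card ι := by
  have h : ({x | ∀ i, P (x i)} : Finset (ι → α)) = Fintype.piFinset fun _ => {a | P a} := by
    ext x
    simp only [mem_filter_univ, Fintype.mem_piFinset]
  rw [h, Fintype.card_piFinset, prod_const, card_univ]

theorem card_filter_not_injective_add_descFactorial [DecidableEq α] :
    #{x : ι → α | ¬ Injective x} + (Fintype.card α).descFactorial (Fintype.card ι) =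
      Fintype.card α ^ Fintype.card ι := by
  rw [← Fintype.card_embedding_eq,
    Fintype.card_congr (Equiv.subtypeInjectiveEquivEmbedding ι α).symm, Fintype.card_subtype,
    add_comm, card_filter_add_card_filter_not, card_univ, Fintype.card_fun]

theorem exists_card_filter_not_injective_le (ι : Type*) [Fintype ι] [DecidableEq ι] {δ : ℝ}
    (hδ : 0 < δ) :
    ∃ N : ℕ, ∀ (α : Type*) [Fintype α] [DecidableEq α], N ≤ Fintype.card α →
      (#{x : ι → α | ¬ Injective x} : ℝ) ≤ δ * (Fintype.card α : ℝ) ^ Fintype.card ι := by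
  obtain ⟨N, hN⟩ := Filter.eventually_atTop.1
    ((isEquivalent_descFactorial (Fintype.card ι)).isLittleO.def hδ)
  refine ⟨N, fun α _ _ hα => ?_⟩
  have hsum : (#{x : ι → α | ¬ Injective x} : ℝ) +
      (Fintype.card α).descFactorial (Fintype.card ι) = (Fintype.card α : ℝ) ^ Fintype.card ι := by
    exact_mod_cast card_filter_not_injective_add_descFactorial
  have hdiff := hN _ hα
  simp only [Pi.sub_apply, norm_pow, RCLike.norm_natCast] at hdiff
  linarith [(abs_le.1 hdiff).1]

theorem card_mul_pow_le_sum_pow {a : ℝ} (ha : 0 ≤ a) {d : α → ℝ}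
    (hd : ∀ b, 0 ≤ d b) (h : Fintype.card α * a ≤ ∑ b, d b) (t : ℕ) :
    Fintype.card α * a ^ t ≤ ∑ b, d b ^ t := by
  rcases t with _ | t
  · simp
  rcases isEmpty_or_nonempty α
  · simp
  have key := pow_sum_div_card_le_sum_pow (s := univ) (fun b _ => hd b) t
  rw [card_univ] at key
  refine le_trans ?_ key
  rw [le_div_iff₀ (by positivity)]
  calc _ = (Fintype.card α * a) ^ (t + 1) := by ring
    _ ≤ _ := by gcongr

theorem le_sum_card_filter_forall_apply {β : Type*} [Fintype β] (r : α → β → Prop)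
    [∀ a b, Decidable (r a b)] [∀ (x : ι → α) b, Decidable (∀ i, r (x i) b)] {c : ℝ} (hc : 0 ≤ c)
    (h : c * Fintype.card α * Fintype.card β ≤ ∑ b, (#{a | r a b} : ℝ)) :
    c ^ Fintype.card ι * Fintype.card α ^ Fintype.card ι * Fintype.card β ≤
      ∑ x : ι → α, (#{b | ∀ i, r (x i) b} : ℝ) := by
  have double_count : ∑ x : ι → α, #{b | ∀ i, r (x i) b} =
      ∑ b, #{a | r a b} ^ Fintype.card ι :=
    (sum_card_bipartiteAbove_eq_sum_card_bipartiteBelow fun (x : ι → α) b =>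
      ∀ i, r (x i) b).trans <|
      sum_congr rfl fun b _ => by rw [bipartiteBelow, card_filter_forall_apply fun a => r a b]
  rw [← Nat.cast_sum, double_count, ← mul_pow, mul_comm]
  push_cast
  exact card_mul_pow_le_sum_pow (by positivity) (fun _ => Nat.cast_nonneg _) (by linarith) _

end Counting

section Blowup

open Finset Function

theorem exists_card_eq_le_card_filter_forall_mem (t : ℕ) {c : ℝ} (hc : 0 < c) :
    ∃ N : ℕ, ∀ (α β : Type*) [Fintype α] [Fintype β] [DecidableEq α] (r : α → β → Prop)
      [∀ a b, Decidable (r a b)], N ≤ Fintype.card α →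
      c * Fintype.card α * Fintype.card β ≤ ∑ b, (#{a | r a b} : ℝ) →
      ∃ T : Finset α, #T = t ∧ c ^ t / 2 * Fintype.card β ≤ #{b | ∀ a ∈ T, r a b} := by
  obtain ⟨N, hN⟩ := exists_card_filter_not_injective_le (Fin t) (δ := c ^ t / 2) (by positivity)
  refine ⟨max N t, fun α β _ _ _ r _ hα hr => ?_⟩
  let common (x : Fin t → α) : Finset β := {b | ∀ i, r (x i) b}
  suffices ∃ x : Fin t → α, Injective x ∧ c ^ t / 2 * Fintype.card β ≤ #(common x) by
    obtain ⟨x, hx, hle⟩ := this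
    exact ⟨univ.image x, by simp [card_image_of_injective _ hx], by simpa [common] using hle⟩
  have hall : _ ≤ ∑ x, (#(common x) : ℝ) := le_sum_card_filter_forall_apply r hc.le hr
  have hnoninj := hN α (le_of_max_le_left hα)
  rw [Fintype.card_fin] at hall hnoninj
  have hnoninj_sum : ∑ x with ¬ Injective x, (#(common x) : ℝ) ≤
      c ^ t / 2 * Fintype.card α ^ t * Fintype.card β := by
    calc _ ≤ ∑ x : Fin t → α with ¬ Injective x, (Fintype.card β : ℝ) :=
          sum_le_sum fun x _ => by exact_mod_cast card_le_univ _
      _ ≤ _ := by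
          rw [sum_const, nsmul_eq_mul]
          gcongr
  obtain ⟨x₀⟩ : Nonempty (Fin t ↪ α) := by
    rw [Embedding.nonempty_iff_card_le, Fintype.card_fin]
    exact le_of_max_le_right hα
  have hinj : (#{x : Fin t → α | Injective x} : ℝ) ≤ Fintype.card α ^ t := by
    exact_mod_cast (card_le_univ _).trans_eq (by rw [Fintype.card_fun, Fintype.card_fin])
  have hinj_sum : ∑ x : Fin t → α with Injective x, c ^ t / 2 * (Fintype.card β : ℝ) ≤
      ∑ x with Injective x, (#(common x) : ℝ) := by
    have hsplit := sum_filter_add_sum_filter_not univ (fun x : Fin t → α => Injective x)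
      fun x => (#(common x) : ℝ)
    calc _ ≤ c ^ t / 2 * Fintype.card α ^ t * Fintype.card β := by
          rw [sum_const, nsmul_eq_mul, ← mul_assoc, mul_comm (#_ : ℝ)]
          gcongr
      _ ≤ _ := by linarith
  obtain ⟨x, hx, hle⟩ :=
    exists_le_of_sum_le ⟨⇑x₀, (mem_filter_univ _).2 x₀.injective⟩ hinj_sum
  exact ⟨x, (mem_filter_univ _).1 hx, hle⟩

theorem sum_card_filter_cons_mem {p : ℕ} {V : Type*} [Fintype V] [DecidableEq V]
    (S : Finset (Fin (p + 1) → V)) :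
    ∑ w : Fin p → V, #{v : V | (Fin.cons v w : Fin (p + 1) → V) ∈ S} = #S := by
  have h := Fintype.sum_equiv (Fin.consEquiv fun _ => V)
    (fun x => if (Fin.cons x.1 x.2 : Fin (p + 1) → V) ∈ S then 1 else 0)
    (fun x => if x ∈ S then 1 else 0) fun _ => rfl
  rw [Fintype.sum_prod_type_right, ← card_filter, filter_univ_mem] at h
  simpa only [card_filter] using h

theorem exists_piFinset_subset (p t : ℕ) {c : ℝ} (hc : 0 < c) :
    ∃ N : ℕ, ∀ (V : Type*) [Fintype V] [DecidableEq V] (S : Finset (Fin p → V)),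
      N ≤ Fintype.card V → c * (Fintype.card V : ℝ) ^ p ≤ #S →
      ∃ X : Fin p → Finset V, (∀ i, #(X i) = t) ∧ Fintype.piFinset X ⊆ S := by
  induction p generalizing c with
  | zero =>
    refine ⟨0, fun V _ _ S _ hS => ⟨finZeroElim, finZeroElim, fun x _ => ?_⟩⟩
    have hpos : (0 : ℝ) < #S := by linarith
    obtain ⟨y, hy⟩ := card_pos.1 (Nat.cast_pos.1 hpos)
    rwa [Subsingleton.elim x y]
  | succ p ih =>
    obtain ⟨N₁, hN₁⟩ := exists_card_eq_le_card_filter_forall_mem t hc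
    obtain ⟨N₂, hN₂⟩ := ih (c := c ^ t / 2) (by positivity)
    refine ⟨max N₁ N₂, fun V _ _ S hV hS => ?_⟩
    obtain ⟨T, hT, hcommon⟩ := hN₁ V (Fin p → V)
      (fun v w => (Fin.cons v w : Fin (p + 1) → V) ∈ S) (le_of_max_le_left hV) (by
        rw [← Nat.cast_sum, sum_card_filter_cons_mem]
        simpa [pow_succ', mul_assoc] using hS)
    obtain ⟨X, hX, hXS⟩ := hN₂ V {w | ∀ v ∈ T, Fin.cons v w ∈ S} (le_of_max_le_right hV) (by
      simpa using hcommon)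
    refine ⟨Fin.cons T X, Fin.cases hT hX, fun x hx => ?_⟩
    rw [Fintype.mem_piFinset, Fin.forall_fin_succ] at hx
    have htail : Fin.tail x ∈ Fintype.piFinset X := Fintype.mem_piFinset.2 hx.2
    rw [← Fin.cons_self_tail x]
    exact (mem_filter_univ _).1 (hXS htail) _ hx.1

theorem exists_piFinset_subset_fiber (p t : ℕ) (K : Type*) [Finite K] {c : ℝ}
    (hc : 0 < c) :
    ∃ N : ℕ, ∀ (V : Type*) [Fintype V] [DecidableEq V] (S : Finset (Fin p → V))
      (f : (Fin p → V) → K), N ≤ Fintype.card V → c * (Fintype.card V : ℝ) ^ p ≤ #S →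
      ∃ (X : Fin p → Finset V) (y : K), (∀ i, #(X i) = t) ∧
        ∀ x ∈ Fintype.piFinset X, x ∈ S ∧ f x = y := by
  classical
  have := Fintype.ofFinite K
  obtain ⟨N, hN⟩ := exists_piFinset_subset p t (c := c / (Fintype.card K + 1)) (by positivity)
  refine ⟨N + 1, fun V _ _ S f hV hS => ?_⟩
  have hVpos : 0 < Fintype.card V := by omega
  have hSpos : (0 : ℝ) < #S := lt_of_lt_of_le (by positivity) hS
  obtain ⟨x₀, -⟩ := card_pos.1 (Nat.cast_pos.1 hSpos)
  obtain ⟨y, -, hy⟩ := exists_le_card_fiber_of_nsmul_le_card_of_maps_to (M := ℝ) (s := S)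
    (t := univ) (f := f) (b := c / (Fintype.card K + 1) * (Fintype.card V : ℝ) ^ p)
    (fun _ _ => mem_univ _) ⟨f x₀, mem_univ _⟩ (by
      rw [card_univ, nsmul_eq_mul]
      refine le_trans ?_ hS
      rw [div_mul_eq_mul_div, mul_div_left_comm]
      refine mul_le_of_le_one_right (by positivity) ?_
      exact (div_le_one (by positivity)).2 (by linarith))
  obtain ⟨X, hX, hXS⟩ := hN V _ (by omega) hy
  exact ⟨X, y, hX, fun x hx => mem_filter.1 (hXS hx)⟩

theorem card_filter_forall_ne_not_rel {V : Type*} [Fintype V] (R : V → V → Prop)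
    [DecidableRel R] {m : ℕ} (i : Fin (m + 1)) :
    #{x : Fin (m + 1) → V | ∀ j ≠ i, ¬ R (x i) (x j)} = ∑ v, #{w | ¬ R v w} ^ m := by
  have h := Fintype.sum_equiv (Fin.insertNthEquiv (fun _ => V) i)
    (fun x => if ∀ j, ¬ R x.1 (x.2 j) then 1 else 0)
    (fun x => if ∀ j ≠ i, ¬ R (x i) (x j) then 1 else 0) fun x => by
      simp [Fin.forall_iff_succAbove i]
  rw [Fintype.sum_prod_type] at h
  simp only [← card_filter] at h
  rw [← h]
  refine sum_congr rfl fun v _ => ?_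
  rw [card_filter_forall_apply (fun w => ¬ R v w), Fintype.card_fin]

theorem card_filter_exists_forall_ne_not_rel_le {V : Type*} [Fintype V] (R : V → V → Prop)
    [DecidableRel R] {r : ℝ} (hr : ∀ v, (#{w | ¬ R v w} : ℝ) ≤ r * Fintype.card V) (m : ℕ) :
    (#{x : Fin (m + 1) → V | ∃ i, ∀ j ≠ i, ¬ R (x i) (x j)} : ℝ) ≤
      (m + 1 : ℕ) * r ^ m * Fintype.card V ^ (m + 1) := by
  classical
  have hunion : ({x | ∃ i, ∀ j ≠ i, ¬ R (x i) (x j)} : Finset (Fin (m + 1) → V)) =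
      univ.biUnion fun i => {x | ∀ j ≠ i, ¬ R (x i) (x j)} := by
    ext x
    simp only [mem_filter_univ, mem_biUnion, mem_univ, true_and]
  calc _ ≤ ∑ i : Fin (m + 1), (#{x : Fin (m + 1) → V | ∀ j ≠ i, ¬ R (x i) (x j)} : ℝ) := by
        rw [hunion]
        exact_mod_cast card_biUnion_le
    _ = ∑ _i : Fin (m + 1), ∑ v, (#{w | ¬ R v w} : ℝ) ^ m := by
        simp only [card_filter_forall_ne_not_rel, Nat.cast_sum, Nat.cast_pow]
    _ ≤ ∑ _i : Fin (m + 1), ∑ _v : V, (r * Fintype.card V) ^ m := by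
        gcongr
        exact hr _
    _ = _ := by
        simp only [sum_const, card_univ, Fintype.card_fin, nsmul_eq_mul]
        ring

theorem exists_card_filter_exists_forall_ne_not_rel_le {ε δ : ℝ} (hε : 0 < ε) (hδ : 0 < δ) :
    ∃ m : ℕ, ∀ (V : Type*) [Fintype V] (R : V → V → Prop) [DecidableRel R],
      (∀ v, ε * Fintype.card V ≤ #{w | R v w}) →
      (#{x : Fin (m + 1) → V | ∃ i, ∀ j ≠ i, ¬ R (x i) (x j)} : ℝ) ≤
        δ * (Fintype.card V : ℝ) ^ (m + 1) := by
  set r := max (1 - ε) 0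
  have hr : r < 1 := max_lt (by linarith) one_pos
  have hlim : Filter.Tendsto (fun m : ℕ => ((m + 1 : ℕ) : ℝ) * r ^ m) Filter.atTop (nhds 0) := by
    have h := (tendsto_self_mul_const_pow_of_lt_one (le_max_right _ _) hr).add
      (tendsto_pow_atTop_nhds_zero_of_lt_one (le_max_right _ _) hr)
    simpa [add_mul] using h
  obtain ⟨m, hm⟩ := (hlim.eventually (ge_mem_nhds hδ)).exists
  refine ⟨m, fun V _ R _ hdeg => ?_⟩
  have hmiss (v : V) : (#{w | ¬ R v w} : ℝ) ≤ r * Fintype.card V := by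
    have h := card_filter_add_card_filter_not (s := univ) (R v)
    rw [card_univ, ← @Nat.cast_inj ℝ, Nat.cast_add] at h
    have : (1 - ε) * Fintype.card V ≤ r * Fintype.card V := by
      gcongr
      exact le_max_left _ _
    linarith [hdeg v]
  calc _ ≤ _ := card_filter_exists_forall_ne_not_rel_le R hmiss m
    _ ≤ _ := by gcongr

theorem exists_half_le_card_filter_injective_and_rel {ε : ℝ} (hε : 0 < ε) :
    ∃ m N : ℕ, ∀ (V : Type*) [Fintype V] [DecidableEq V] (R : V → V → Prop) [DecidableRel R],
      N ≤ Fintype.card V → (∀ v, ε * Fintype.card V ≤ #{w | R v w}) →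
      1 / 2 * (Fintype.card V : ℝ) ^ (m + 1) ≤
        #{x : Fin (m + 1) → V | Injective x ∧ ∀ i, ∃ j ≠ i, R (x i) (x j)} := by
  obtain ⟨m, hm⟩ := exists_card_filter_exists_forall_ne_not_rel_le hε (δ := 1 / 4) (by norm_num)
  obtain ⟨N, hN⟩ := exists_card_filter_not_injective_le (Fin (m + 1)) (δ := 1 / 4) (by norm_num)
  refine ⟨m, N, fun V _ _ R _ hV hdeg => ?_⟩
  have hnoninj := hN V hV
  rw [Fintype.card_fin] at hnoninj
  have hsink := hm V R hdeg
  have hbad : #{x : Fin (m + 1) → V | ¬ (Injective x ∧ ∀ i, ∃ j ≠ i, R (x i) (x j))} ≤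
      #{x : Fin (m + 1) → V | ¬ Injective x} +
        #{x : Fin (m + 1) → V | ∃ i, ∀ j ≠ i, ¬ R (x i) (x j)} := by
    refine (card_le_card fun x hx => ?_).trans (card_union_le _ _)
    rw [mem_union, mem_filter_univ, mem_filter_univ]
    rw [mem_filter_univ] at hx
    contrapose! hx
    exact hx
  have htotal := card_filter_add_card_filter_not (s := univ)
    fun x : Fin (m + 1) → V => Injective x ∧ ∀ i, ∃ j ≠ i, R (x i) (x j)
  rw [card_univ, Fintype.card_fun, Fintype.card_fin, ← @Nat.cast_inj ℝ] at htotal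
  rw [← @Nat.cast_le ℝ] at hbad
  push_cast at htotal hbad
  linarith

theorem exists_ordered_blowup {t : ℕ} (ht : 0 < t) {ε : ℝ} (hε : 0 < ε) :
    ∃ m N : ℕ, ∀ (V : Type*) [Fintype V] [LinearOrder V] (R : V → V → Prop) [DecidableRel R],
      N ≤ Fintype.card V → (∀ v, ε * Fintype.card V ≤ #{w | R v w}) →
      ∃ (Y : Fin (m + 1) → Finset V) (g : Fin (m + 1) → Fin (m + 1)), (∀ i, #(Y i) = t) ∧
        (∀ i j, i < j → ∀ a ∈ Y i, ∀ b ∈ Y j, a < b) ∧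
        ∀ i, ∀ a ∈ Y i, ∀ b ∈ Y (g i), R a b := by
  obtain ⟨m, N₁, hN₁⟩ := exists_half_le_card_filter_injective_and_rel hε
  obtain ⟨N₂, hN₂⟩ := exists_piFinset_subset_fiber (m + 1) t
    (Equiv.Perm (Fin (m + 1)) × (Fin (m + 1) → Fin (m + 1) → Prop)) one_half_pos
  refine ⟨m, max N₁ N₂, fun V _ _ R _ hV hdeg => ?_⟩
  -- Colour each tuple by its order type and its `R`-pattern, and take a monochromatic box.
  obtain ⟨X, ⟨τ, M⟩, hX, hbox⟩ := hN₂ V _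
    (fun x => (Tuple.sort x, fun i j => R (x i) (x j))) (le_of_max_le_right hV)
    (hN₁ V R (le_of_max_le_left hV) hdeg)
  simp only [mem_filter_univ, Prod.mk.injEq, Fintype.mem_piFinset] at hbox
  obtain ⟨x₀, hx₀⟩ : ∃ x₀ : Fin (m + 1) → V, ∀ i, x₀ i ∈ X i :=
    Classical.skolem.1 fun i => card_pos.1 (hX i ▸ ht)
  have hpair {i j} (hij : i ≠ j) {a b} (ha : a ∈ X i) (hb : b ∈ X j) :
      ∃ x : Fin (m + 1) → V, (∀ l, x l ∈ X l) ∧ x i = a ∧ x j = b := by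
    refine ⟨update (update x₀ i a) j b, fun l => ?_, by simp [hij], by simp⟩
    simp only [update_apply]
    grind
  have hsucc (i) : ∃ j ≠ i, M i j := by
    obtain ⟨⟨-, hx⟩, -, rfl⟩ := hbox x₀ hx₀
    exact hx i
  choose g hg hMg using hsucc
  refine ⟨fun i => X (τ i), fun i => τ.symm (g (τ i)), fun i => hX _, ?_, ?_⟩
  · intro i j hij a ha b hb
    obtain ⟨x, hx, rfl, rfl⟩ := hpair (τ.injective.ne hij.ne) ha hb
    obtain ⟨⟨hinj, -⟩, rfl, -⟩ := hbox x hx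
    exact ((Tuple.monotone_sort x).strictMono_of_injective
      (hinj.comp (Tuple.sort x).injective)) hij
  · intro i a ha b hb
    simp only [Equiv.apply_symm_apply] at hb
    obtain ⟨x, hx, rfl, rfl⟩ := hpair (hg _).symm ha hb
    obtain ⟨-, -, rfl⟩ := hbox x hx
    exact hMg _

theorem exists_invariant_set_sameCycle {ι : Type*} [Finite ι] [Nonempty ι] (g : ι → ι) :
    ∃ (s : Set ι) (π : Equiv.Perm s), s.Nonempty ∧ (∀ a, (π a : ι) = g a) ∧
      ∀ a b, π.SameCycle a b := by
  obtain ⟨s, hs⟩ := (Set.toFinite {s : Set ι | s.Nonempty ∧ Set.MapsTo g s s}).exists_minimal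
    ⟨Set.univ, Set.univ_nonempty, Set.mapsTo_univ _ _⟩
  have hmin {u : Set ι} (hu : u.Nonempty) (hgu : Set.MapsTo g u u) (hus : u ⊆ s) : s ⊆ u :=
    hs.2 ⟨hu, hgu⟩ hus
  have hsurj : Set.SurjOn g s s := hmin (hs.1.1.image g)
    (Set.mapsTo_iff_image_subset.2 (Set.image_mono hs.1.2.image_subset)) hs.1.2.image_subset
  let π : Equiv.Perm s := Equiv.ofBijective (hs.1.2.restrict) (Finite.injective_iff_bijective.1 <|
    Finite.injective_iff_surjective.2 (Set.MapsTo.restrict_surjective_iff _ |>.2 hsurj))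
  refine ⟨s, π, hs.1.1, fun a => rfl, fun a b => ?_⟩
  obtain ⟨c, hc, hcb⟩ := hmin (u := (↑) '' {b | π.SameCycle a b})
    (Set.Nonempty.image _ ⟨a, .refl _ _⟩) (by
      rintro _ ⟨b, hb, rfl⟩
      exact ⟨π b, Equiv.Perm.sameCycle_apply_right.2 hb, rfl⟩) (by simp) b.2
  rwa [← Subtype.ext hcb]

theorem exists_cyclic_blowup {t : ℕ} (ht : 0 < t) {ε : ℝ} (hε : 0 < ε) :
    ∃ m N : ℕ, ∀ (V : Type*) [Fintype V] [LinearOrder V] (R : V → V → Prop) [DecidableRel R],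
      N ≤ Fintype.card V → (∀ v, ε * Fintype.card V ≤ #{w | R v w}) →
      ∃ (s : Set (Fin m)) (π : Equiv.Perm s) (y : s ×ₗ Fin t ↪o V), s.Nonempty ∧
        (∀ a b, π.SameCycle a b) ∧
        ∀ a i j, R (y (toLex (a, i))) (y (toLex (π a, j))) := by
  obtain ⟨m, N, hN⟩ := exists_ordered_blowup ht hε
  refine ⟨m + 1, N, fun V _ _ R _ hV hdeg => ?_⟩
  obtain ⟨Y, g, hYt, hY, hR⟩ := hN V R hV hdeg
  obtain ⟨s, π, hs, hπg, hπ⟩ := exists_invariant_set_sameCycle g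
  let y (p : s ×ₗ Fin t) : V := (Y (ofLex p).1).orderEmbOfFin (hYt _) (ofLex p).2
  have hy (p) : y p ∈ Y (ofLex p).1 := orderEmbOfFin_mem _ _ _
  have hmono : StrictMono y := by
    refine Lex.forall.2 fun ⟨a, i⟩ => Lex.forall.2 fun ⟨b, j⟩ h => ?_
    obtain hab | ⟨rfl, hij⟩ := Prod.Lex.toLex_lt_toLex.1 h
    · exact hY _ _ hab _ (hy _) _ (hy _)
    · exact (OrderEmbedding.strictMono _) hij
  refine ⟨s, π, .ofStrictMono y hmono, hs, hπ, fun a i j => hR a _ (hy _) _ ?_⟩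
  rw [← hπg]
  exact hy _

end Blowup

section Cycles

open Equiv Equiv.Perm

variable {V : Type*} {σ : Perm V}

/-- The number of cycles of `σ`, fixed points included. -/
noncomputable def numCycles (σ : Perm V) : ℕ :=
  Nat.card (Quotient (SameCycle.setoid σ))

theorem numCycles_permCongr {W : Type*} (e : V ≃ W) : numCycles (e.permCongr σ) = numCycles σ := by
  have hpow (i : ℤ) : e.permCongr σ ^ i = e.permCongr (σ ^ i) :=
    (map_zpow e.permCongrHom σ i).symm
  have h (u v : V) : σ.SameCycle u v ↔ (e.permCongr σ).SameCycle (e u) (e v) := by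
    simp only [SameCycle, hpow, permCongr_apply, symm_apply_apply, e.injective.eq_iff]
  exact (Nat.card_congr (Quotient.congr e h)).symm

variable [Finite V]

theorem sameCycle_induction {P : V → Prop} {u v : V} (h : σ.SameCycle u v) (hu : P u)
    (step : ∀ w, P w → P (σ w)) : P v := by
  obtain ⟨i, -, rfl⟩ := h.exists_pow_eq'
  clear h
  induction i with
  | zero => exact hu
  | succ i ih =>
    rw [pow_succ', mul_apply]
    exact step _ ih

theorem card_le_numCycles {κ : Type*} (B : κ → Set V) (hne : ∀ i, (B i).Nonempty)
    (hinv : ∀ i, Set.MapsTo σ (B i) (B i)) (hdisj : Pairwise fun i j => Disjoint (B i) (B j)) :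
    Nat.card κ ≤ numCycles σ := by
  choose b hb using hne
  refine Nat.card_le_card_of_injective
    (fun i => (Quotient.mk (SameCycle.setoid σ) (b i))) fun i j hij => ?_
  by_contra hne
  exact Set.disjoint_left.1 (hdisj hne)
    (sameCycle_induction (Quotient.exact hij) (hb i) fun _ hw => hinv i hw) (hb j)

theorem numCycles_le_one_of_sameCycle (h : ∀ u v, σ.SameCycle u v) : numCycles σ ≤ 1 :=
  Finite.card_le_one_iff_subsingleton.2
    ⟨Quotient.ind fun u => Quotient.ind fun v => Quotient.sound (h u v)⟩

variable [DecidableEq V] {y z : V}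

theorem sameCycle_mul_swap_of_not_sameCycle (h : ¬ σ.SameCycle y z) :
    (σ * swap y z).SameCycle z y := by
  by_contra hzy
  refine hzy (sameCycle_induction (P := fun w => σ.SameCycle y w ∧ (σ * swap y z).SameCycle z w)
    (sameCycle_apply_left.2 (.refl σ y)) ⟨sameCycle_apply_right.2 (.refl _ _), ?_⟩ ?_).2
  · rw [← sameCycle_apply_left, mul_apply, swap_apply_right]
  · rintro w ⟨hyw, hzw⟩
    refine ⟨sameCycle_apply_right.2 hyw, ?_⟩
    have hwy : w ≠ y := by rintro rfl; exact hzy hzw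
    have hwz : w ≠ z := by rintro rfl; exact h hyw
    rw [← sameCycle_apply_right, mul_apply, swap_apply_of_ne_of_ne hwy hwz] at hzw
    exact hzw

theorem sameCycle_mul_swap_of_sameCycle (h : ¬ σ.SameCycle y z) {u v : V}
    (huv : σ.SameCycle u v) : (σ * swap y z).SameCycle u v := by
  refine sameCycle_induction huv (.refl _ _) fun w hw => hw.trans ?_
  have hswap : (σ * swap y z).SameCycle w (swap y z w) := by
    rw [swap_apply_def]
    split_ifs with hy hz
    · rw [hy]
      exact (sameCycle_mul_swap_of_not_sameCycle h).symm
    · rw [hz]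
      exact sameCycle_mul_swap_of_not_sameCycle h
    · rfl
  simpa using sameCycle_apply_right.2 hswap

theorem sameCycle_mul_swap_iff (h : ¬ σ.SameCycle y z) {u v : V} :
    (σ * swap y z).SameCycle u v ↔ σ.SameCycle u v ∨
      (σ.SameCycle y u ∨ σ.SameCycle z u) ∧ (σ.SameCycle y v ∨ σ.SameCycle z v) := by
  constructor
  · intro huv
    refine sameCycle_induction (P := fun w => σ.SameCycle u w ∨
      (σ.SameCycle y u ∨ σ.SameCycle z u) ∧ (σ.SameCycle y w ∨ σ.SameCycle z w))
      huv (.inl (.refl _ _)) fun w hw => ?_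
    rw [mul_apply, swap_apply_def]
    simp only [sameCycle_apply_right]
    split_ifs with hy hz
    · subst hy
      exact .inr ⟨hw.elim (fun e => .inl e.symm) And.left, .inr (.refl _ _)⟩
    · subst hz
      exact .inr ⟨hw.elim (fun e => .inr e.symm) And.left, .inl (.refl _ _)⟩
    · exact hw
  · have hmono {u v : V} (huv : σ.SameCycle u v) := sameCycle_mul_swap_of_sameCycle h huv
    have hzy := sameCycle_mul_swap_of_not_sameCycle h
    have hy {w : V} (hw : σ.SameCycle y w ∨ σ.SameCycle z w) : (σ * swap y z).SameCycle y w :=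
      hw.elim hmono fun e => hzy.symm.trans (hmono e)
    rintro (huv | ⟨hu, hv⟩)
    · exact hmono huv
    · exact (hy hu).symm.trans (hy hv)

theorem numCycles_mul_swap_add_one (h : ¬ σ.SameCycle y z) :
    numCycles (σ * swap y z) + 1 = numCycles σ := by
  let mk : V → Quotient (SameCycle.setoid σ) := Quotient.mk _
  let φ (q : {q // q ≠ mk z}) : Quotient (SameCycle.setoid (σ * swap y z)) :=
    Quotient.map' (s₁ := SameCycle.setoid σ) id
      (fun _ _ => sameCycle_mul_swap_of_sameCycle h) q.1
  have hφ : Function.Bijective φ := by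
    constructor
    · rintro ⟨⟨a⟩, ha⟩ ⟨⟨b⟩, hb⟩ hab
      have ha' : ¬ σ.SameCycle z a := fun e => ha (Quotient.sound e.symm)
      have hb' : ¬ σ.SameCycle z b := fun e => hb (Quotient.sound e.symm)
      refine Subtype.ext (Quotient.sound ?_)
      rcases (sameCycle_mul_swap_iff h).1 (Quotient.exact hab) with hab | ⟨hya, hyb⟩
      · exact hab
      · exact (hya.resolve_right ha').symm.trans (hyb.resolve_right hb')
    · rintro ⟨a⟩
      by_cases hza : σ.SameCycle z a
      · exact ⟨⟨mk y, fun e => h (Quotient.exact e)⟩,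
          Quotient.sound ((sameCycle_mul_swap_iff h).2 (.inr ⟨.inl (.refl _ _), .inr hza⟩))⟩
      · exact ⟨⟨mk a, fun e => hza (Quotient.exact e).symm⟩, rfl⟩
  rw [numCycles, numCycles, ← Nat.card_eq_of_bijective φ hφ]
  have hcompl := Set.ncard_add_ncard_compl {mk z}
  rwa [Set.ncard_singleton, add_comm] at hcompl

end Cycles

section PermGraph

open Equiv Equiv.Perm

variable {V : Type*}

/-- The graph joining every vertex to its image under `σ`; its components are the cycles of `σ`. -/
def permGraph (σ : Perm V) : SimpleGraph V :=
  .fromRel fun u v => σ u = v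

variable {σ : Perm V}

theorem permGraph_le {G : SimpleGraph V} (h : ∀ v, G.Adj v (σ v)) : permGraph σ ≤ G := by
  rintro u v ⟨-, rfl | rfl⟩
  · exact h u
  · exact (h v).symm

theorem ncard_permGraph_adj {v : V} (h : σ (σ v) ≠ v) : {u | (permGraph σ).Adj v u}.ncard = 2 := by
  have hv : σ v ≠ v := fun e => h (by rw [e, e])
  have hset : {u | (permGraph σ).Adj v u} = {σ v, σ.symm v} := by
    ext u
    simp only [permGraph, SimpleGraph.fromRel_adj, Set.mem_ofPred_eq, Set.mem_insert_iff,
      Set.mem_singleton_iff, eq_symm_apply, eq_comm (a := σ v)]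
    refine and_iff_right_of_imp ?_
    rintro (rfl | rfl) e
    · exact hv e.symm
    · exact hv (congrArg σ e)
  rw [hset, Set.ncard_pair]
  rwa [ne_eq, eq_symm_apply]

variable [Finite V]

theorem permGraph_reachable_iff {u v : V} : (permGraph σ).Reachable u v ↔ σ.SameCycle u v := by
  constructor
  · rintro ⟨p⟩
    induction p with
    | nil => rfl
    | cons h p ih =>
      obtain ⟨-, rfl | rfl⟩ := h
      · exact sameCycle_apply_left.1 ih
      · exact sameCycle_apply_left.2 ih
  · intro h
    refine sameCycle_induction h .rfl fun w hw => hw.trans ?_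
    by_cases hfix : σ w = w
    · rw [hfix]
    · exact SimpleGraph.Adj.reachable ⟨Ne.symm hfix, .inl rfl⟩

theorem card_connectedComponent_permGraph :
    Nat.card (permGraph σ).ConnectedComponent = numCycles σ :=
  Nat.card_congr (Quotient.congrRight (r := (permGraph σ).reachableSetoid)
    (r' := SameCycle.setoid σ) fun _ _ => permGraph_reachable_iff)

end PermGraph

section Reroute

open Equiv Equiv.Perm

variable {V ι : Type*}

/-- The permutation `c` with the images of the points `x q` shuffled: it sends `x q` to
`c (x (f q))` and agrees with `c` off the range of `x`. -/
noncomputable def reroute (c : Perm V) (x : ι ↪ V) (f : Perm ι) : Perm V :=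
  c * f.viaEmbedding x

variable {c : Perm V} {x : ι ↪ V} {f : Perm ι}

theorem reroute_apply_embedding (q : ι) : reroute c x f (x q) = c (x (f q)) :=
  congrArg c (f.viaEmbedding_apply x q)

theorem reroute_apply_of_notMem {v : V} (hv : v ∉ Set.range x) : reroute c x f v = c v :=
  congrArg c (f.viaEmbedding_apply_of_notMem x v hv)

theorem reroute_mul_swap [DecidableEq V] [DecidableEq ι] (q q' : ι) :
    reroute c x (f * swap q q') = reroute c x f * swap (x q) (x q') := by
  ext v
  by_cases hv : v ∈ Set.range x
  · obtain ⟨p, rfl⟩ := hv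
    rw [reroute_apply_embedding, mul_apply, mul_apply, ← x.injective.map_swap,
      reroute_apply_embedding]
  · rw [reroute_apply_of_notMem hv, mul_apply, swap_apply_of_ne_of_ne, reroute_apply_of_notMem hv]
    all_goals rintro rfl; exact hv ⟨_, rfl⟩

theorem exists_sameCycle_reroute [Finite V] [Nonempty ι] (hc : ∀ u v, c.SameCycle u v) (v : V) :
    ∃ q, (reroute c x f).SameCycle v (x q) := by
  by_contra! hv
  obtain ⟨q⟩ := ‹Nonempty ι›
  refine hv q (sameCycle_induction (hc v (x q)) (.refl _ _) fun w hw => ?_)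
  have hwx : w ∉ Set.range x := by
    rintro ⟨p, rfl⟩
    exact hv p hw
  rw [← reroute_apply_of_notMem hwx]
  exact sameCycle_apply_right.2 hw

theorem reroute_reroute_apply_ne (hc : ∀ v, c (c v) ≠ v) (h₁ : ∀ q, c (x q) ∉ Set.range x)
    (h₂ : ∀ q, c (c (x q)) ∉ Set.range x) (v : V) : reroute c x f (reroute c x f v) ≠ v := by
  by_cases hv : v ∈ Set.range x
  · obtain ⟨q, rfl⟩ := hv
    rw [reroute_apply_embedding, reroute_apply_of_notMem (h₁ _)]
    exact fun h => h₂ _ ⟨q, h.symm⟩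
  rw [reroute_apply_of_notMem hv]
  by_cases hcv : c v ∈ Set.range x
  · obtain ⟨q, hq⟩ := hcv
    rw [← hq, reroute_apply_embedding]
    rintro rfl
    exact h₂ _ ⟨q, hq⟩
  · rw [reroute_apply_of_notMem hcv]
    exact hc v

end Reroute

section FinRotate

variable {n : ℕ}

theorem val_finRotate (i : Fin n) :
    (finRotate n i : ℕ) = if (i : ℕ) + 1 = n then 0 else (i : ℕ) + 1 := by
  cases n with
  | zero => exact i.elim0
  | succ n => simp only [coe_finRotate, Fin.ext_iff, Fin.val_last, add_left_inj]

theorem sameCycle_finRotate (i j : Fin n) : (finRotate n).SameCycle i j := by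
  rcases lt_or_ge n 2 with hn | hn
  · have : Subsingleton (Fin n) := Fin.subsingleton_iff_le_one.2 (by omega)
    exact (Subsingleton.elim i j).sameCycle _
  · obtain ⟨n, rfl⟩ := Nat.exists_eq_add_of_le' hn
    refine isCycle_finRotate.sameCycle ?_ ?_ <;>
      rw [← Equiv.Perm.mem_support, support_finRotate] <;> exact Finset.mem_univ _

theorem finRotate_finRotate_ne (hn : 3 ≤ n) (i : Fin n) : finRotate n (finRotate n i) ≠ i := by
  intro h
  have hval := congrArg Fin.val h
  simp only [val_finRotate] at hval
  split_ifs at hval <;> omega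

theorem finRotate_mem_Ioc {i j v : Fin n} (hv : v ∈ Set.Ico i j) :
    finRotate n v ∈ Set.Ioc i j := by
  obtain ⟨hi, hj⟩ := hv
  have hval := val_finRotate v
  rw [if_neg (by omega)] at hval
  constructor <;> omega

end FinRotate

section Interval

open Equiv Equiv.Perm Set

theorem eq_of_mem_Ioc_of_covBy {ι V : Type*} [LinearOrder ι] [Preorder V] {x : ι ↪o V}
    {q q' r r' : ι} (hq : q ⋖ q') (hr : r ⋖ r') {v : V} (hvq : v ∈ Ioc (x q) (x q'))
    (hvr : v ∈ Ioc (x r) (x r')) : q' = r' :=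
  le_antisymm (hq.ge_of_gt (x.lt_iff_lt.1 (hvq.1.trans_le hvr.2)))
    (hr.ge_of_gt (x.lt_iff_lt.1 (hvr.1.trans_le hvq.2)))

variable {ι : Type*} [Preorder ι] {q q' : ι}

theorem notMem_range_of_mem_Ioo {V : Type*} [Preorder V] {x : ι ↪o V} (hq : q ⋖ q') {v : V}
    (hv : v ∈ Ioo (x q) (x q')) : v ∉ range x := by
  rintro ⟨p, rfl⟩
  exact hq.2 (x.lt_iff_lt.1 hv.1) (x.lt_iff_lt.1 hv.2)

variable {n : ℕ} {x : ι ↪o Fin n} {f : Perm ι}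

theorem reroute_finRotate_apply_mem_Ioc {p : ι} (hq : f p < q) :
    reroute (finRotate n) x.toEmbedding f (x p) ∈ Ioc (x (f p)) (x q) := by
  rw [← RelEmbedding.coe_toEmbedding, reroute_apply_embedding]
  exact finRotate_mem_Ioc ⟨le_rfl, x.strictMono hq⟩

theorem reroute_finRotate_mem_Ioc (hq : q ⋖ q') {v : Fin n} (hv : v ∈ Ioo (x q) (x q')) :
    reroute (finRotate n) x.toEmbedding f v ∈ Ioc v (x q') := by
  rw [reroute_apply_of_notMem (notMem_range_of_mem_Ioo hq hv)]
  exact finRotate_mem_Ioc ⟨le_rfl, hv.2⟩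

theorem sameCycle_reroute_finRotate (hq : q ⋖ q') {v : Fin n} (hv : v ∈ Ioc (x q) (x q')) :
    (reroute (finRotate n) x.toEmbedding f).SameCycle v (x q') := by
  induction v using WellFoundedGT.induction with
  | ind v ih =>
    obtain rfl | hlt := hv.2.eq_or_lt
    · rfl
    · have hnext := reroute_finRotate_mem_Ioc (f := f) hq ⟨hv.1, hlt⟩
      exact sameCycle_apply_left.1 (ih _ hnext.1 ⟨hv.1.trans hnext.1, hnext.2⟩)

end Interval

section Blocks

open Equiv Equiv.Perm Set Function

/-! The points `x (toLex (a, j))` form the block `a`, an interval of the range of `x`; that `f`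
maps block `a` to block `π a` is written as `Semiconj (fun q => (ofLex q).1) f π`. -/

variable {n : ℕ} {A : Type*} [LinearOrder A] {π : Perm A}

theorem exists_semiconj_le_numCycles_reroute [Nonempty A] (π : Perm A) {k : ℕ}
    (x : A ×ₗ Fin (k + 1) ↪o Fin n) :
    ∃ f : Perm (A ×ₗ Fin (k + 1)), Semiconj (fun q => (ofLex q).1) f π ∧
      k ≤ numCycles (reroute (finRotate n) x.toEmbedding f) := by
  let f : Perm (A ×ₗ Fin (k + 1)) := toLex.permCongr (prodCongr π (finRotate (k + 1)).symm)
  have hf (a : A) (j : Fin k) : f (toLex (a, j.succ)) = toLex (π a, j.castSucc) :=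
    congrArg (fun l => toLex (π a, l)) ((finRotate _).symm_apply_eq.2 (by simp))
  let B (j : Fin k) : Set (Fin n) :=
    ⋃ a, Ioc (x (toLex (a, j.castSucc))) (x (toLex (a, j.succ)))
  have hcov (a : A) (j : Fin k) : toLex (a, j.castSucc) ⋖ toLex (a, j.succ) :=
    Prod.Lex.toLex_covBy_toLex_iff.2 (.inl ⟨rfl, by simp⟩)
  refine ⟨f, fun q => rfl, ?_⟩
  have hle := card_le_numCycles (σ := reroute (finRotate n) x.toEmbedding f) B ?_ ?_ ?_
  · rwa [Nat.card_fin] at hle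
  · intro j
    obtain ⟨a⟩ := ‹Nonempty A›
    exact ⟨_, mem_iUnion.2 ⟨a, x.strictMono (hcov a j).1, le_rfl⟩⟩
  · intro j v hv
    obtain ⟨a, hva, hv'⟩ := mem_iUnion.1 hv
    obtain rfl | hlt := hv'.eq_or_lt
    · have hnext := reroute_finRotate_apply_mem_Ioc (x := x) (hf a j ▸ (hcov (π a) j).1)
      rw [hf] at hnext
      exact mem_iUnion.2 ⟨π a, hnext⟩
    · exact mem_iUnion.2 ⟨a, Ioc_subset_Ioc_left hva.le
        (reroute_finRotate_mem_Ioc (hcov a j) ⟨hva, hlt⟩)⟩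
  · refine fun i j hij => disjoint_left.2 fun v hvi hvj => hij ?_
    obtain ⟨a, ha⟩ := mem_iUnion.1 hvi
    obtain ⟨b, hb⟩ := mem_iUnion.1 hvj
    have heq := eq_of_mem_Ioc_of_covBy (hcov a i) (hcov b j) ha hb
    exact Fin.succ_injective _ (Prod.ext_iff.1 (toLex.injective heq)).2

variable {β : Type*} [LinearOrder β] {b₀ b₁ : β} {x : A ×ₗ β ↪o Fin n} {f : Perm (A ×ₗ β)}

theorem sameCycle_reroute_of_semiconj (hb : b₀ ⋖ b₁) (hf : Semiconj (fun q => (ofLex q).1) f π)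
    (hx : ∀ a i j, (reroute (finRotate n) x.toEmbedding f).SameCycle
      (x (toLex (a, i))) (x (toLex (a, j)))) (a : A) (i j : β) :
    (reroute (finRotate n) x.toEmbedding f).SameCycle
      (x (toLex (a, i))) (x (toLex (π a, j))) := by
  obtain ⟨p, hp⟩ := f.surjective (toLex (π a, b₀))
  have hpa : (ofLex p).1 = a := π.injective ((hf p).symm.trans (by rw [hp]; rfl))
  subst hpa
  have hcov : f p ⋖ toLex (π (ofLex p).1, b₁) :=
    hp ▸ Prod.Lex.toLex_covBy_toLex_iff.2 (.inl ⟨rfl, hb⟩)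
  refine (hx _ i (ofLex p).2).trans (.trans ?_ (hx _ b₁ j))
  exact sameCycle_apply_left.1
    (sameCycle_reroute_finRotate hcov (reroute_finRotate_apply_mem_Ioc hcov.1))

theorem numCycles_reroute_le_one [Finite A] (hπ : ∀ a b, π.SameCycle a b) (hb : b₀ ⋖ b₁)
    [Nonempty A] (hf : Semiconj (fun q => (ofLex q).1) f π)
    (hx : ∀ a i j, (reroute (finRotate n) x.toEmbedding f).SameCycle
      (x (toLex (a, i))) (x (toLex (a, j)))) :
    numCycles (reroute (finRotate n) x.toEmbedding f) ≤ 1 := by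
  set σ := reroute (finRotate n) x.toEmbedding f
  have hrange (p q : A ×ₗ β) : σ.SameCycle (x p) (x q) :=
    sameCycle_induction (P := fun a => ∀ j, σ.SameCycle (x p) (x (toLex (a, j))))
      (hπ (ofLex p).1 (ofLex q).1) (hx _ (ofLex p).2)
      (fun a ha j => (ha j).trans (sameCycle_reroute_of_semiconj hb hf hx a j j)) (ofLex q).2
  have : Nonempty (A ×ₗ β) := ⟨toLex (Classical.arbitrary A, b₀)⟩
  refine numCycles_le_one_of_sameCycle fun u v => ?_
  obtain ⟨p, hp⟩ := exists_sameCycle_reroute (x := x.toEmbedding) (f := f) sameCycle_finRotate u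
  obtain ⟨q, hq⟩ := exists_sameCycle_reroute (x := x.toEmbedding) (f := f) sameCycle_finRotate v
  exact hp.trans ((hrange p q).trans hq.symm)

theorem exists_semiconj_numCycles_reroute_add_one_eq [Finite A] (hπ : ∀ a b, π.SameCycle a b)
    (hb : b₀ ⋖ b₁) [Nonempty A] (hf : Semiconj (fun q => (ofLex q).1) f π)
    (hlt : 1 < numCycles (reroute (finRotate n) x.toEmbedding f)) :
    ∃ f' : Perm (A ×ₗ β), Semiconj (fun q => (ofLex q).1) f' π ∧
      numCycles (reroute (finRotate n) x.toEmbedding f') + 1 =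
        numCycles (reroute (finRotate n) x.toEmbedding f) := by
  obtain ⟨a, i, j, hij⟩ : ∃ a i j, ¬ (reroute (finRotate n) x.toEmbedding f).SameCycle
      (x (toLex (a, i))) (x (toLex (a, j))) := by
    contrapose! hlt
    exact numCycles_reroute_le_one hπ hb hf hlt
  refine ⟨f * swap (toLex (a, i)) (toLex (a, j)), fun q => (hf _).trans (congrArg π ?_), ?_⟩
  · change (ofLex (swap _ _ q)).1 = _
    rw [swap_apply_def]
    split_ifs with hi hj
    · rw [hi]; rfl
    · rw [hj]; rfl
    · rfl
  · rw [reroute_mul_swap]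
    exact numCycles_mul_swap_add_one hij

theorem exists_semiconj_numCycles_reroute_eq [Finite A] (hπ : ∀ a b, π.SameCycle a b)
    (hb : b₀ ⋖ b₁) [Nonempty A] {k : ℕ} (hk : 1 ≤ k) (hf : Semiconj (fun q => (ofLex q).1) f π)
    (hle : k ≤ numCycles (reroute (finRotate n) x.toEmbedding f)) :
    ∃ f' : Perm (A ×ₗ β), Semiconj (fun q => (ofLex q).1) f' π ∧
      numCycles (reroute (finRotate n) x.toEmbedding f') = k := by
  obtain ⟨d, hd⟩ := Nat.exists_eq_add_of_le hle
  clear hle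
  induction d generalizing f with
  | zero => exact ⟨f, hf, hd⟩
  | succ d ih =>
    obtain ⟨f', hf', hcard⟩ := exists_semiconj_numCycles_reroute_add_one_eq hπ hb hf (x := x)
      (by omega)
    exact ih hf' (by omega)

/-- Spacing the points keeps rerouting from producing cycles of length two. -/
theorem exists_spaced_subfamily {m : ℕ} (y : A ×ₗ Fin (3 * m) ↪o Fin n) :
    ∃ x : A ×ₗ Fin m ↪o Fin n, (∀ a j, ∃ i, x (toLex (a, j)) = y (toLex (a, i))) ∧
      (∀ q, finRotate n (x q) ∉ range x) ∧ ∀ q, finRotate n (finRotate n (x q)) ∉ range x := by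
  let z (l : Fin 3) (q : A ×ₗ Fin m) : Fin n :=
    y (toLex ((ofLex q).1, ⟨3 * (ofLex q).2 + l, by omega⟩))
  have hz (q) {l l' : Fin 3} (h : l < l') : z l q < z l' q :=
    y.strictMono (Prod.Lex.toLex_lt_toLex.2 (.inr ⟨rfl, Nat.add_lt_add_left h _⟩))
  have hz' {q q'} (h : q < q') (l l' : Fin 3) : z l q < z l' q' := by
    refine y.strictMono (Prod.Lex.toLex_lt_toLex.2 ((Prod.Lex.lt_iff.1 h).imp_right ?_))
    rintro ⟨ha, hj⟩
    exact ⟨ha, by rw [Fin.mk_lt_mk]; omega⟩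
  let x : A ×ₗ Fin m ↪o Fin n := .ofStrictMono (z 0) fun _ _ h => hz' h 0 0
  have hnotMem {v : Fin n} {q} (hv : v ∈ Ioc (x q) (z 2 q)) : v ∉ range x := by
    rintro ⟨q', rfl⟩
    exact hv.2.not_gt (hz' (x.lt_iff_lt.1 hv.1) 2 0)
  have hone (q) : finRotate n (x q) ∈ Ioc (x q) (z 1 q) :=
    finRotate_mem_Ioc ⟨le_rfl, hz q (by decide)⟩
  have hlt (q) : z 1 q < z 2 q := hz q (by decide)
  refine ⟨x, fun a j => ⟨_, rfl⟩, fun q => ?_, fun q => ?_⟩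
  · exact hnotMem (Ioc_subset_Ioc_right (hlt q).le (hone q))
  · exact hnotMem (finRotate_mem_Ioc ⟨(hone q).1.le, (hone q).2.trans_lt (hlt q)⟩)

end Blocks

theorem ncard_setOf_comp_equiv {α β : Type*} (e : α ≃ β) (P : β → Prop) :
    {a | P (e a)}.ncard = {b | P b}.ncard :=
  Set.ncard_preimage_of_injective_subset_range e.injective
    (e.surjective.range_eq ▸ Set.subset_univ _)

section Rel

open Equiv Function Set

variable {n : ℕ} {R : Fin n → Fin n → Prop}

theorem exists_perm_rel_numCycles_eq_of_blowup (hn : 3 ≤ n) (hR : ∀ v, R v (finRotate n v))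
    {A : Type*} [LinearOrder A] [Finite A] [Nonempty A] {π : Perm A}
    (hπ : ∀ a b, π.SameCycle a b) {k : ℕ} (hk : 1 ≤ k) (y : A ×ₗ Fin (3 * (k + 1)) ↪o Fin n)
    (hy : ∀ a i j, R (y (toLex (a, i))) (finRotate n (y (toLex (π a, j))))) :
    ∃ σ : Perm (Fin n), (∀ v, R v (σ v)) ∧ (∀ v, σ (σ v) ≠ v) ∧ numCycles σ = k := by
  obtain ⟨x, hxy, hx₁, hx₂⟩ := exists_spaced_subfamily y
  obtain ⟨f₀, hf₀, hle⟩ := exists_semiconj_le_numCycles_reroute π x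
  have hcov : Fin.castSucc (⟨0, hk⟩ : Fin k) ⋖ Fin.succ ⟨0, hk⟩ := by simp
  obtain ⟨f, hf, hcard⟩ := exists_semiconj_numCycles_reroute_eq hπ hcov hk hf₀ hle
  refine ⟨reroute (finRotate n) x.toEmbedding f, fun v => ?_,
    reroute_reroute_apply_ne (finRotate_finRotate_ne hn) hx₁ hx₂, hcard⟩
  by_cases hv : v ∈ range x.toEmbedding
  · obtain ⟨q, rfl⟩ := hv
    rw [reroute_apply_embedding]
    obtain ⟨i, hi⟩ := hxy (ofLex q).1 (ofLex q).2
    obtain ⟨j, hj⟩ := hxy (π (ofLex q).1) (ofLex (f q)).2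
    have hfq : f q = toLex (π (ofLex q).1, (ofLex (f q)).2) := Prod.ext (hf q) rfl
    have hadj := hy (ofLex q).1 i j
    rwa [← hi, ← hj, ← hfq] at hadj
  · rw [reroute_apply_of_notMem hv]
    exact hR v

theorem exists_perm_rel_numCycles_eq {k : ℕ} (hk : 1 ≤ k) {ε : ℝ} (hε : 0 < ε) :
    ∃ N : ℕ, ∀ (n : ℕ) (R : Fin n → Fin n → Prop), N ≤ n → (∀ v, R v (finRotate n v)) →
      (∀ v, ε * n ≤ {w | R v w}.ncard) →
      ∃ σ : Perm (Fin n), (∀ v, R v (σ v)) ∧ (∀ v, σ (σ v) ≠ v) ∧ numCycles σ = k := by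
  classical
  obtain ⟨m, N, hN⟩ := exists_cyclic_blowup (t := 3 * (k + 1)) (by positivity) hε
  refine ⟨max N 3, fun n R hn hR hdeg => ?_⟩
  obtain ⟨s, π, y, hs, hπ, hy⟩ := hN (Fin n) (fun v w => R v (finRotate n w))
    (by rw [Fintype.card_fin]; exact le_of_max_le_left hn) fun v => by
      rw [Fintype.card_fin, ← Set.ncard_coe_finset, Finset.coe_filter_univ,
        ncard_setOf_comp_equiv (finRotate n) (R v)]
      exact hdeg v
  have := hs.to_subtype
  exact exists_perm_rel_numCycles_eq_of_blowup (le_of_max_le_right hn) hR hπ hk y hy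

end Rel

theorem exists_equiv_adj_finRotate_of_isHamiltonian {V : Type*} [Fintype V] [DecidableEq V]
    {G : SimpleGraph V} (hG : G.IsHamiltonian) (hcard : Fintype.card V ≠ 1) :
    ∃ e : Fin (Fintype.card V) ≃ V, ∀ i, G.Adj (e i) (e (finRotate _ i)) := by
  obtain ⟨a, p, hp⟩ := hG hcard
  have hnil := hp.isCycle.not_nil
  have hlen : p.tail.support.length = Fintype.card V := by
    rw [SimpleGraph.Walk.length_support, SimpleGraph.Walk.length_tail_add_one hnil, hp.length_eq]
  have hlen' := p.tail.length_support
  refine ⟨(finCongr hlen.symm).trans hp.isHamiltonian_tail.getVertEquiv, fun i => ?_⟩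
  change G.Adj (p.tail.getVert i) (p.tail.getVert (finRotate _ i))
  rw [val_finRotate]
  split_ifs with hi
  · rw [show (i : ℕ) = p.tail.length by omega, SimpleGraph.Walk.getVert_length,
      SimpleGraph.Walk.getVert_zero]
    exact p.adj_snd hnil
  · exact p.tail.adj_getVert_succ (by omega)

/-- **Main theorem.**  For every positive integer `k` and every `ε > 0` there exists
`N = N(k, ε)` such that every Hamiltonian graph `G` on `n ≥ N` vertices with minimum
degree `δ(G) ≥ εn` contains a 2-factor consisting of exactly `k` vertex-disjoint
cycles, i.e. a spanning 2-regular subgraph with exactly `k` connected components. -/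
theorem stmt_12 (k : ℕ) (hk : 1 ≤ k) (ε : ℝ) (hε : 0 < ε) :
    ∃ N : ℕ, ∀ (V : Type) [Fintype V] [DecidableEq V] (G : SimpleGraph V),
      N ≤ Fintype.card V →
      G.IsHamiltonian →
      (∀ v : V, ε * Fintype.card V ≤ ({u | G.Adj v u}.ncard : ℝ)) →
      ∃ F : SimpleGraph V, F ≤ G ∧ (∀ v : V, {u | F.Adj v u}.ncard = 2) ∧
        Nat.card F.ConnectedComponent = k := by
  obtain ⟨N, hN⟩ := exists_perm_rel_numCycles_eq hk hε
  refine ⟨max N 2, fun V _ _ G hV hG hdeg => ?_⟩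
  have hcard : Fintype.card V ≠ 1 := by have := le_of_max_le_right hV; omega
  obtain ⟨e, he⟩ := exists_equiv_adj_finRotate_of_isHamiltonian hG hcard
  obtain ⟨σ, hσG, hσ, hσk⟩ := hN _ (fun i j => G.Adj (e i) (e j)) (le_of_max_le_left hV) he
    fun i => by rw [ncard_setOf_comp_equiv e (G.Adj (e i))]; exact hdeg (e i)
  refine ⟨permGraph (e.permCongr σ), permGraph_le fun v => ?_, fun v => ncard_permGraph_adj ?_, ?_⟩
  · simpa using hσG (e.symm v)
  · simpa [← e.eq_symm_apply] using hσ (e.symm v)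
  · rw [card_connectedComponent_permGraph, numCycles_permCongr, hσk]
end
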